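/- arXiv:1311.5319 — 3 statements merged into one kernel-verified Lean document; each statement's English description precedes it below -/
import Mathlib

section
/- Let q ≥ 3 and a be integers with gcd(a,q) = 1, let k be a positive integer, and let ℓ_1 < ℓ_2 < ⋯ be the increasing sequence of all primes congruent to a mod q. Suppose t ≥ 0 is such that k < ℓ_{t+1}. Let g = (ℓ_{t+1} ⋯ ℓ_{t+k})^{-1} ∏_{p ≤ ℓ_{t+k}} p, the product of all primes p ≤ ℓ_{t+k} other than ℓ_{t+1}, …, ℓ_{t+k}. Then the k-tuple of linear forms gqx + ℓ_{t+1}, …, gqx + ℓ_{t+k} is admissible: for every prime p, #{n mod p : ∏_{i=1}^{k} (gqn + ℓ_{t+i}) ≡ 0 mod p} < p. -/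
open scoped Classical

/-- The property of being a prime congruent to `a` mod `q`. -/
def PrimeMod (q : ℕ) (a : ℤ) (p : ℕ) : Prop :=
  p.Prime ∧ (p : ℤ) ≡ a [ZMOD (q : ℤ)]

/-- `ell q a i` is the `i`-th prime congruent to `a` mod `q` (1-indexed), so that
`ℓ_1 < ℓ_2 < ⋯` is the increasing sequence of all primes congruent to `a` mod `q`. -/
noncomputable def ell (q : ℕ) (a : ℤ) (i : ℕ) : ℕ :=
  Nat.nth (PrimeMod q a) (i - 1)

/-- `gShiu q a k t = (ℓ_{t+1} ⋯ ℓ_{t+k})⁻¹ ∏_{p ≤ ℓ_{t+k}} p`: the product of all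
primes `p ≤ ℓ_{t+k}` other than `ℓ_{t+1}, …, ℓ_{t+k}`. -/
noncomputable def gShiu (q : ℕ) (a : ℤ) (k t : ℕ) : ℕ :=
  ∏ p ∈ (Finset.range (ell q a (t + k) + 1)).filter
      (fun p => p.Prime ∧ ∀ j ∈ Finset.Icc 1 k, p ≠ ell q a (t + j)), p

/-!
Modulo a prime `p`, a form `g x + h` with `p ∤ g` has exactly one root, and one with `p ∣ g` and
`p ∤ h` has none. So `k` forms with a common leading coefficient `g` prime to all their constant
terms can cover all residues only if `p ≤ k` and `p ∤ g`. Shiu's `g` is prime to every `ℓ_{t+i}`,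
and it is divisible by all primes `p ≤ k`, since these lie below `ℓ_{t+1}`.
-/

section Admissible

variable {ι : Type*} {s : Finset ι} {g h : ι → ℕ}

/-- Admissibility of the linear forms `g i * x + h i`, `i ∈ s`: their product has fewer than `p`
roots modulo each prime `p`. The residue classes mod `p` are represented by `0, …, p - 1`; the
forms are indexed by `s` and are not required to be distinct or nonconstant. -/
def IsAdmissibleTuple (s : Finset ι) (g h : ι → ℕ) : Prop :=
  ∀ p : ℕ, p.Prime → ((Finset.range p).filter
    (fun n : ℕ => (∏ i ∈ s, (g i * n + h i)) % p = 0)).card < p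

lemma card_filter_range_dvd_linear_le_one {m c : ℕ} (hc : m.Coprime c) (d : ℕ) :
    ((Finset.range m).filter (fun n => m ∣ c * n + d)).card ≤ 1 := by
  refine Finset.card_le_one.2 fun x hx y hy => ?_
  rw [Finset.mem_filter, Finset.mem_range] at hx hy
  have hxy : c * x + d ≡ c * y + d [MOD m] :=
    (Nat.modEq_zero_iff_dvd.2 hx.2).trans (Nat.modEq_zero_iff_dvd.2 hy.2).symm
  exact (hxy.add_right_cancel' d |>.cancel_left_of_coprime hc).eq_of_lt_of_lt hx.1 hy.1

lemma card_filter_range_dvd_prod_linear_le {p : ℕ} (hp : p.Prime)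
    (hgh : ∀ i ∈ s, (g i).Coprime (h i)) :
    ((Finset.range p).filter (fun n => p ∣ ∏ i ∈ s, (g i * n + h i))).card ≤
      (s.filter (fun i => ¬ p ∣ g i)).card := by
  have roots_subset : (Finset.range p).filter (fun n => p ∣ ∏ i ∈ s, (g i * n + h i)) ⊆
      (s.filter (fun i => ¬ p ∣ g i)).biUnion
        fun i => (Finset.range p).filter (fun n => p ∣ g i * n + h i) := by
    intro n hn
    obtain ⟨hnp, hdvd⟩ := Finset.mem_filter.1 hn
    obtain ⟨i, hi, hroot⟩ := (hp.prime.dvd_finsetProd_iff _).1 hdvd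
    have hpg : ¬ p ∣ g i := fun hpg =>
      Nat.not_coprime_of_dvd_of_dvd hp.one_lt hpg
        ((Nat.dvd_add_right (hpg.mul_right n)).1 hroot) (hgh i hi)
    exact Finset.mem_biUnion.2
      ⟨i, Finset.mem_filter.2 ⟨hi, hpg⟩, Finset.mem_filter.2 ⟨hnp, hroot⟩⟩
  refine (Finset.card_le_card roots_subset).trans ?_
  simpa only [mul_one] using Finset.card_biUnion_le_card_mul _ _ 1 fun i hi =>
    card_filter_range_dvd_linear_le_one
      (hp.coprime_iff_not_dvd.2 (Finset.mem_filter.1 hi).2) (h i)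

theorem isAdmissibleTuple_of_coprime_of_card_lt (hgh : ∀ i ∈ s, (g i).Coprime (h i))
    (hcard : ∀ p : ℕ, p.Prime → (s.filter (fun i => ¬ p ∣ g i)).card < p) :
    IsAdmissibleTuple s g h := by
  intro p hp
  simpa only [Nat.dvd_iff_mod_eq_zero] using
    (card_filter_range_dvd_prod_linear_le hp hgh).trans_lt (hcard p hp)

theorem isAdmissibleTuple_const_of_coprime_of_dvd {c : ℕ} (hch : ∀ i ∈ s, c.Coprime (h i))
    (hdvd : ∀ p : ℕ, p.Prime → p ≤ s.card → p ∣ c) :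
    IsAdmissibleTuple s (fun _ => c) h := by
  refine isAdmissibleTuple_of_coprime_of_card_lt hch fun p hp => ?_
  by_cases hpc : p ∣ c
  · simpa [hpc] using hp.pos
  · exact (Finset.card_filter_le _ _).trans_lt (not_le.1 (mt (hdvd p hp) hpc))

end Admissible

section PrimorialOmitting

variable {ι : Type*} {s : Finset ι} {ℓ : ι → ℕ} {N q : ℕ}

/-- The primorial of `N` with the primes `ℓ j`, `j ∈ s`, left out. The omitted primes are given as
a family so that `gShiu` is literally an instance. -/
def primorialOmitting (N : ℕ) (s : Finset ι) (ℓ : ι → ℕ) : ℕ :=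
  ∏ p ∈ (Finset.range (N + 1)).filter (fun p => p.Prime ∧ ∀ j ∈ s, p ≠ ℓ j), p

lemma prime_dvd_primorialOmitting_iff {p : ℕ} (hp : p.Prime) :
    p ∣ primorialOmitting N s ℓ ↔ p ≤ N ∧ ∀ j ∈ s, p ≠ ℓ j := by
  constructor
  · intro hdvd
    obtain ⟨r, hr, hpr⟩ := (hp.prime.dvd_finsetProd_iff _).1 hdvd
    obtain ⟨hrN, hr, hrℓ⟩ := Finset.mem_filter.1 hr
    obtain rfl := (Nat.prime_dvd_prime_iff_eq hp hr).1 hpr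
    exact ⟨Finset.mem_range_succ_iff.1 hrN, hrℓ⟩
  · rintro ⟨hpN, hpℓ⟩
    exact Finset.dvd_prod_of_mem (fun r : ℕ => r)
      (Finset.mem_filter.2 ⟨Finset.mem_range_succ_iff.2 hpN, hp, hpℓ⟩)

lemma primorialOmitting_coprime {j : ι} (hj : j ∈ s) (hℓ : (ℓ j).Prime) :
    (primorialOmitting N s ℓ).Coprime (ℓ j) :=
  Nat.Coprime.symm <| hℓ.coprime_iff_not_dvd.2 fun hdvd =>
    ((prime_dvd_primorialOmitting_iff hℓ).1 hdvd).2 j hj rfl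

theorem shiu_tuple_admissible_general (hℓ : ∀ j ∈ s, (ℓ j).Prime)
    (hqℓ : ∀ j ∈ s, q.Coprime (ℓ j)) (hsℓ : ∀ j ∈ s, s.card < ℓ j) (hsN : s.card ≤ N) :
    IsAdmissibleTuple s (fun _ => primorialOmitting N s ℓ * q) ℓ := by
  refine isAdmissibleTuple_const_of_coprime_of_dvd
    (fun j hj => (primorialOmitting_coprime hj (hℓ j hj)).mul_left (hqℓ j hj))
    fun p hp hps => Dvd.dvd.mul_right ?_ q
  exact (prime_dvd_primorialOmitting_iff hp).2
    ⟨hps.trans hsN, fun j hj => (hps.trans_lt (hsℓ j hj)).ne⟩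

end PrimorialOmitting

section PrimesInProgression

variable {q : ℕ} {a : ℤ}

lemma PrimeMod.coprime {p : ℕ} (hp : PrimeMod q a p) (ha : Int.gcd a q = 1) : q.Coprime p := by
  rw [Nat.coprime_comm, ← Nat.isCoprime_iff_coprime, Int.isCoprime_iff_gcd_eq_one,
    ← Int.gcd_emod, hp.2.eq, Int.gcd_emod, ha]

lemma infinite_setOfPred_primeMod (hq : q ≠ 0) (ha : Int.gcd a q = 1) :
    {p | PrimeMod q a p}.Infinite := by
  refine Set.infinite_of_forall_exists_gt fun n => ?_
  obtain ⟨p, hnp, hp⟩ :=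
    Nat.forall_exists_prime_gt_and_zmodEq n hq (Int.isCoprime_iff_gcd_eq_one.2 ha)
  exact ⟨p, hp, hnp⟩

lemma primeMod_ell (hq : q ≠ 0) (ha : Int.gcd a q = 1) (i : ℕ) : PrimeMod q a (ell q a i) :=
  Nat.nth_mem_of_infinite (infinite_setOfPred_primeMod hq ha) _

lemma ell_monotone (hq : q ≠ 0) (ha : Int.gcd a q = 1) : Monotone (ell q a) := fun _ _ hij =>
  (Nat.nth_strictMono (infinite_setOfPred_primeMod hq ha)).monotone (Nat.sub_le_sub_right hij 1)

end PrimesInProgression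

/-- With `q ≥ 3`, `gcd(a, q) = 1`, `k ≥ 1` and `t ≥ 0` such that `k < ℓ_{t+1}`, the
`k`-tuple of linear forms `gqx + ℓ_{t+1}, …, gqx + ℓ_{t+k}` is admissible: for every
prime `p`, the number of residue classes `n mod p` with
`∏_{i=1}^{k} (gqn + ℓ_{t+i}) ≡ 0 (mod p)` is strictly less than `p`. -/
theorem shiu_tuple_admissible (q : ℕ) (a : ℤ) (hq : 3 ≤ q) (ha : Int.gcd a q = 1)
    (k : ℕ) (hk : 0 < k) (t : ℕ) (ht : k < ell q a (t + 1)) :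
    ∀ p : ℕ, p.Prime →
      ((Finset.range p).filter
        (fun n : ℕ =>
          (∏ j ∈ Finset.Icc 1 k, (gShiu q a k t * q * n + ell q a (t + j))) % p
            = 0)).card < p := by
  have hprime (j : ℕ) := primeMod_ell (show q ≠ 0 by omega) ha (t + j)
  have hlt {j : ℕ} (hj : 1 ≤ j) : (Finset.Icc 1 k).card < ell q a (t + j) := by
    simpa only [Nat.card_Icc, Nat.add_sub_cancel] using
      ht.trans_le (ell_monotone (by omega) ha (Nat.add_le_add_left hj t))
  exact shiu_tuple_admissible_general (fun j _ => (hprime j).1) (fun j _ => (hprime j).coprime ha)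
    (fun j hj => hlt (Finset.mem_Icc.1 hj).1) (hlt hk).le
end

section
/- Let q ≥ 3 and a be integers with gcd(a,q) = 1, let ℓ_1 < ℓ_2 < ⋯ be the increasing sequence of all primes congruent to a mod q, and let k ≥ 2 and M ≥ 1 be integers. If ℓ_{t+k} ≥ ℓ_{t+1}² for every t ∈ {1, 2, …, (k−1)M + k}, then ℓ_{(k−1)(M+1) + k + 1} ≥ ℓ_{k+1}^{2(M+1)}. -/
/-!
Taking `t = (k - 1) * j + k` in the hypothesis turns `t + 1` into `(k - 1) * j + k + 1` and `t + k`
into the same expression at `j + 1`. So along this arithmetic progression of indices each term is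
at least the square of the previous one, and after `M + 1` steps the exponent has become
`2 ^ (M + 1) ≥ 2 * (M + 1)`.
-/

section OrderedMonoidWithZero

variable {R : Type*} [MonoidWithZero R] [Preorder R] [ZeroLEOneClass R] [PosMulMono R]
  [MulPosMono R]

theorem pow_pow_le_of_forall_pow_le_succ {v : ℕ → R} {d n : ℕ} (h₀ : 0 ≤ v 0)
    (hv : ∀ j < n, v j ^ d ≤ v (j + 1)) : v 0 ^ d ^ n ≤ v n := by
  induction n with
  | zero => simp
  | succ n ih =>
    have ih : v 0 ^ d ^ n ≤ v n := ih fun j hj ↦ hv j (hj.trans n.lt_succ_self)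
    calc v 0 ^ d ^ (n + 1) = (v 0 ^ d ^ n) ^ d := by rw [pow_succ, pow_mul]
      _ ≤ v n ^ d := pow_le_pow_left₀ (pow_nonneg h₀ _) ih d
      _ ≤ v (n + 1) := hv n n.lt_succ_self

theorem ell_iterated_squaring_general {u : ℕ → R} {d k M : ℕ} (hk : 1 ≤ k)
    (h₀ : 0 ≤ u (k + 1))
    (h : ∀ t ∈ Finset.Icc k ((k - 1) * M + k), u (t + 1) ^ d ≤ u (t + k)) :
    u (k + 1) ^ d ^ (M + 1) ≤ u ((k - 1) * (M + 1) + k + 1) := by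
  have hstep : ∀ j < M + 1,
      u ((k - 1) * j + k + 1) ^ d ≤ u ((k - 1) * (j + 1) + k + 1) := fun j hj ↦ by
    have hjM : (k - 1) * j ≤ (k - 1) * M := Nat.mul_le_mul_left _ (Nat.lt_succ_iff.mp hj)
    have hindex : (k - 1) * (j + 1) + k + 1 = (k - 1) * j + k + k := by
      rw [Nat.mul_succ]
      lia
    rw [hindex]
    exact h _ (Finset.mem_Icc.mpr ⟨Nat.le_add_left _ _, Nat.add_le_add_right hjM k⟩)
  simpa only [mul_zero, zero_add] using
    pow_pow_le_of_forall_pow_le_succ (v := fun j ↦ u ((k - 1) * j + k + 1))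
      (by simpa only [mul_zero, zero_add] using h₀) hstep

end OrderedMonoidWithZero

theorem pow_le_pow_right_of_ne_zero (a : ℕ) {m n : ℕ} (hm : m ≠ 0) (hmn : m ≤ n) :
    a ^ m ≤ a ^ n := by
  obtain rfl | ha := a.eq_zero_or_pos
  · simp [hm]
  · exact Nat.pow_le_pow_right ha hmn

/-- Let `q ≥ 3`, `gcd(a, q) = 1`, `k ≥ 2` and `M ≥ 1`.  If `ℓ_{t+k} ≥ ℓ_{t+1}²` for
every `t ∈ {1, 2, …, (k−1)M + k}`, then
`ℓ_{(k−1)(M+1) + k + 1} ≥ ℓ_{k+1}^{2(M+1)}`. -/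
theorem ell_iterated_squaring (q : ℕ) (a : ℤ) (hq : 3 ≤ q) (ha : Int.gcd a q = 1)
    (k M : ℕ) (hk : 2 ≤ k) (hM : 1 ≤ M)
    (h : ∀ t ∈ Finset.Icc 1 ((k - 1) * M + k),
      ell q a (t + 1) ^ 2 ≤ ell q a (t + k)) :
    ell q a (k + 1) ^ (2 * (M + 1)) ≤ ell q a ((k - 1) * (M + 1) + k + 1) := by
  exact (pow_le_pow_right_of_ne_zero _ (by simp) (Nat.mul_le_pow (by simp) (M + 1))).trans
    (ell_iterated_squaring_general (by lia) (Nat.zero_le _)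
      fun t ht ↦ h t (Finset.Icc_subset_Icc_left (by lia) ht))
end

section
/- There exist absolute positive constants A and N such that the following holds. For all integers q ≥ 3 and a with gcd(a,q) = 1 and every integer k ≥ 2, there exists an integer t ≥ 1 with k < ℓ_{t+1}, ℓ_{t+k} < ℓ_{t+1}², and ℓ_{t+k} − ℓ_{t+1} < A q^N k² log(qk), where ℓ_1 < ℓ_2 < ⋯ is the increasing sequence of all primes congruent to a mod q. -/
/-!
Since `t` may be as large as we please, no quantitative form of Linnik's theorem is needed: it is
enough to know the size of `∑ log p / p ^ (1 + δ)`, over the primes `p ≡ a` mod `q`, as `δ → 0`.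

If all windows of `k` consecutive terms beyond a threshold `S` had length at least `S ^ 2`, the
primes would be so sparse that this sum is `O(S + k + k / (δ S) ^ 2)`. On the other hand it is at
least `1 / (q δ) - O(q ^ 5)` for `δ` below a negative power of `q`, because the logarithmic
derivatives of the nontrivial `L`-functions mod `q` are `O(q ^ 5)` there. With `S ≍ q ^ 4 k` and
`δ ≍ q k / S ^ 2` the two estimates contradict each other.

The bound for `L'/L` reduces to a lower bound for `L(s, χ)` near `s = 1`. When `χ ^ 2 ≠ 1` it
comes from the inequality `1 ≤ |L(s, 1) ^ 3 L(s, χ) ^ 4 L(s, χ ^ 2)|`. When `χ` is quadratic, the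
Lambert series `T = ∑ χ(n) / (exp (ε n) - 1) = ∑ (1 * χ)(n) exp (-ε n)` has nonnegative
coefficients that are at least `1` on squares, so `T` is at least of order `ε ^ (-1/2)`, whereas
monotonicity of `1 / x - 1 / (exp x - 1)` and partial summation give `|T - L(1, χ) / ε| ≤ q`.
-/

section

open Filter Finset Topology

/-! ### Partial summation -/

lemma norm_sum_smul_le_of_antitone {E : Type*} [SeminormedAddCommGroup E] [NormedSpace ℝ E]
    {b : ℕ → ℝ} {c : ℕ → E} {B : ℝ} (hb : Antitone b) (hb₀ : ∀ n, 0 ≤ b n)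
    (hc : ∀ M, ‖∑ n ∈ range M, c n‖ ≤ B) (M : ℕ) :
    ‖∑ n ∈ range M, b n • c n‖ ≤ B * b 0 := by
  have hterm {x : ℝ} (hx : 0 ≤ x) (j : ℕ) : ‖x • ∑ i ∈ range j, c i‖ ≤ x * B := by
    rw [norm_smul, Real.norm_of_nonneg hx]
    gcongr
    exact hc j
  have hdiff (i : ℕ) : ‖(b (i + 1) - b i) • ∑ j ∈ range (i + 1), c j‖ ≤
      (b i - b (i + 1)) * B := by
    rw [← norm_neg, ← neg_smul, neg_sub]
    exact hterm (sub_nonneg.2 (hb i.le_succ)) _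
  rw [sum_range_by_parts]
  calc ‖b (M - 1) • ∑ i ∈ range M, c i -
          ∑ i ∈ range (M - 1), (b (i + 1) - b i) • ∑ j ∈ range (i + 1), c j‖
      ≤ b (M - 1) * B + ∑ i ∈ range (M - 1), (b i - b (i + 1)) * B :=
        (norm_sub_le _ _).trans
          (add_le_add (hterm (hb₀ _) M) (norm_sum_le_of_le _ fun i _ => hdiff i))
    _ = B * b 0 := by rw [← sum_mul, sum_range_sub']; ring

section CharacterSums

variable {q : ℕ} [NeZero q] {χ : DirichletCharacter ℂ q}

lemma sum_range_character_eq_zero (hχ : χ ≠ 1) (m : ℕ) :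
    ∑ n ∈ range q, χ ((m + n : ℕ) : ZMod q) = 0 := by
  calc ∑ n ∈ range q, χ ((m + n : ℕ) : ZMod q) = ∑ u : ZMod q, χ (m + u) := by
        refine sum_nbij' (fun n => (n : ZMod q)) ZMod.val ?_ ?_ ?_ ?_ ?_
        · simp
        · simp [ZMod.val_lt]
        · exact fun n hn => ZMod.val_cast_of_lt (mem_range.1 hn)
        · simp
        · simp
    _ = ∑ u : ZMod q, χ u := Fintype.sum_equiv (Equiv.addLeft (m : ZMod q)) _ _ fun _ => rfl
    _ = 0 := MulChar.sum_eq_zero_of_ne_one hχ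

lemma norm_sum_range_character_le (hχ : χ ≠ 1) (m M : ℕ) :
    ‖∑ n ∈ range M, χ ((m + n : ℕ) : ZMod q)‖ ≤ q := by
  induction M using Nat.strong_induction_on generalizing m with
  | _ M ih =>
    rcases lt_or_ge M q with h | h
    · calc ‖∑ n ∈ range M, χ ((m + n : ℕ) : ZMod q)‖ ≤ ∑ _n ∈ range M, (1 : ℝ) :=
            norm_sum_le_of_le _ fun _ _ => χ.norm_le_one _
        _ ≤ q := by simpa using h.le
    · obtain ⟨d, rfl⟩ := Nat.exists_eq_add_of_le h
      rw [sum_range_add, sum_range_character_eq_zero hχ, zero_add]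
      simpa [add_assoc] using ih d (by have := NeZero.pos q; omega) (m + q)

lemma norm_sub_sum_range_mul_character_le (hχ : χ ≠ 1) {b : ℕ → ℝ} {m : ℕ}
    (hb : AntitoneOn b (Set.Ici m)) (hb₀ : ∀ n ≥ m, 0 ≤ b n) {S : ℂ}
    (hS : Tendsto (fun M => ∑ n ∈ range M, (b n : ℂ) * χ n) atTop (𝓝 S)) :
    ‖S - ∑ n ∈ range m, (b n : ℂ) * χ n‖ ≤ q * b m := by
  have htail := ((tendsto_add_atTop_iff_nat m).2 hS).sub_const (∑ n ∈ range m, (b n : ℂ) * χ n)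
  refine le_of_tendsto htail.norm (.of_forall fun M => ?_)
  rw [add_comm M m, sum_range_add, add_sub_cancel_left]
  simpa using norm_sum_smul_le_of_antitone (b := fun n => b (m + n))
    (c := fun n => χ ((m + n : ℕ) : ZMod q)) (B := q)
    (fun i j hij => hb (by simp) (by simp) (by gcongr)) (fun n => hb₀ _ (by simp))
    (norm_sum_range_character_le hχ m) M

end CharacterSums

/-! ### Dirichlet `L`-functions on the real half-line `s ≥ 1` -/

section LFunction

variable {q : ℕ} [NeZero q] {χ : DirichletCharacter ℂ q}

lemma hasSum_LFunction_ofReal (χ : DirichletCharacter ℂ q) {s : ℝ} (hs : 1 < s) :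
    HasSum (fun n : ℕ => ((((n : ℝ) ^ s)⁻¹ : ℝ) : ℂ) * χ n) (χ.LFunction s) := by
  rw [χ.LFunction_eq_LSeries (by simpa using hs)]
  refine (DirichletCharacter.LSeriesSummable_of_one_lt_re χ (by simpa using hs)).hasSum.congr_fun
    fun n => ?_
  rcases eq_or_ne n 0 with rfl | hn
  · simp [Real.zero_rpow (by linarith : s ≠ 0)]
  · rw [LSeries.term_of_ne_zero hn, Complex.ofReal_inv, Complex.ofReal_cpow (Nat.cast_nonneg n)]
    simp [div_eq_inv_mul]

lemma continuous_LFunction_ofReal (hχ : χ ≠ 1) : Continuous fun s : ℝ => χ.LFunction s :=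
  (DirichletCharacter.differentiable_LFunction hχ).continuous.comp Complex.continuous_ofReal

lemma continuousOn_inv_natCast_rpow (n : ℕ) :
    ContinuousOn (fun s : ℝ => ((n : ℝ) ^ s)⁻¹) (Set.Ici 1) := by
  rcases eq_or_ne n 0 with rfl | hn
  · refine (continuousOn_const (c := (0 : ℝ))).congr fun s (hs : 1 ≤ s) => ?_
    simp [Real.zero_rpow (zero_lt_one.trans_le hs).ne']
  · have hn₀ : (0 : ℝ) < n := by exact_mod_cast Nat.pos_of_ne_zero hn
    exact ((Real.continuous_const_rpow hn₀.ne').inv₀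
      fun s => (Real.rpow_pos_of_pos hn₀ s).ne').continuousOn

lemma norm_LFunction_sub_sum_range_le (hχ : χ ≠ 1) {s : ℝ} (hs : 1 ≤ s) {m : ℕ} (hm : m ≠ 0) :
    ‖χ.LFunction s - ∑ n ∈ range m, ((((n : ℝ) ^ s)⁻¹ : ℝ) : ℂ) * χ n‖ ≤
      q * ((m : ℝ) ^ s)⁻¹ := by
  have hcont (n : ℕ) : ContinuousOn (fun s : ℝ => ((n : ℝ) ^ s)⁻¹) (closure (Set.Ioi 1)) := by
    rw [closure_Ioi]
    exact continuousOn_inv_natCast_rpow n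
  have hsum : ContinuousOn (fun s : ℝ => ∑ n ∈ range m, ((((n : ℝ) ^ s)⁻¹ : ℝ) : ℂ) * χ n)
      (closure (Set.Ioi 1)) :=
    continuousOn_finsetSum _ fun n _ =>
      (Complex.continuous_ofReal.comp_continuousOn (hcont n)).mul continuousOn_const
  refine le_on_closure (s := Set.Ioi 1) (fun s (hs : 1 < s) => ?_)
    ((continuous_LFunction_ofReal hχ).continuousOn.sub hsum).norm
    (continuousOn_const.mul (hcont m)) (x := s) (by simpa using hs)
  refine norm_sub_sum_range_mul_character_le hχ (fun i hi j _ hij => ?_) (fun n _ => by positivity)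
    (hasSum_LFunction_ofReal χ hs).tendsto_sum_nat
  have : (0 : ℝ) < i := by exact_mod_cast (Nat.pos_of_ne_zero hm).trans_le hi
  gcongr

lemma tendsto_sum_range_LFunction_one (hχ : χ ≠ 1) :
    Tendsto (fun M => ∑ n ∈ range M, (((n : ℝ)⁻¹ : ℝ) : ℂ) * χ n) atTop (𝓝 (χ.LFunction 1)) := by
  rw [tendsto_iff_norm_sub_tendsto_zero]
  have hlim : Tendsto (fun M : ℕ => (q : ℝ) * (M : ℝ)⁻¹) atTop (𝓝 0) := by
    simpa using (tendsto_inv_atTop_nhds_zero_nat (𝕜 := ℝ)).const_mul (q : ℝ)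
  refine squeeze_zero' (.of_forall fun _ => norm_nonneg _) ?_ hlim
  filter_upwards [eventually_ne_atTop 0] with M hM
  rw [norm_sub_rev]
  simpa using norm_LFunction_sub_sum_range_le hχ le_rfl hM

lemma norm_LFunction_le (hχ : χ ≠ 1) {s : ℝ} (hs : 1 ≤ s) : ‖χ.LFunction s‖ ≤ q := by
  simpa [Real.zero_rpow (zero_lt_one.trans_le hs).ne'] using
    norm_LFunction_sub_sum_range_le hχ hs one_ne_zero

lemma hasSum_deriv_LFunction_ofReal (χ : DirichletCharacter ℂ q) {s : ℝ} (hs : 1 < s) :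
    HasSum (fun n : ℕ => ((Real.log n / (n : ℝ) ^ s : ℝ) : ℂ) * χ n)
      (-deriv χ.LFunction s) := by
  have habs : LSeries.abscissaOfAbsConv (χ ·) < ((s : ℂ).re : EReal) := by
    rw [DirichletCharacter.absicssaOfAbsConv_eq_one (NeZero.ne q), Complex.ofReal_re]
    exact_mod_cast hs
  rw [DirichletCharacter.deriv_LFunction_eq_deriv_LSeries χ (by simpa using hs),
    LSeries_deriv habs, neg_neg]
  refine (LSeriesSummable_logMul_of_lt_re habs).hasSum.congr_fun fun n => ?_
  rcases eq_or_ne n 0 with rfl | hn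
  · simp
  · rw [LSeries.term_of_ne_zero hn, LSeries.logMul, Complex.ofReal_div,
      Complex.ofReal_cpow (Nat.cast_nonneg n), Complex.ofReal_log (Nat.cast_nonneg n)]
    push_cast
    ring

lemma log_div_rpow_le_one {x s : ℝ} (hx : 1 ≤ x) (hs : 1 ≤ s) : Real.log x / x ^ s ≤ 1 := by
  rw [div_le_one (by positivity)]
  exact (Real.log_le_self (by linarith)).trans (Real.self_le_rpow_of_one_le hx hs)

lemma norm_deriv_LFunction_le (hχ : χ ≠ 1) {s : ℝ} (hs : 1 < s) :
    ‖deriv χ.LFunction s‖ ≤ 2 * q := by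
  set b : ℕ → ℝ := fun n => Real.log n / (n : ℝ) ^ s with hb
  have hb_le_one {n : ℕ} (hn : 1 ≤ n) : b n ≤ 1 :=
    log_div_rpow_le_one (by exact_mod_cast hn) hs.le
  have hb_nonneg (n : ℕ) : 0 ≤ b n := div_nonneg (Real.log_natCast_nonneg n) (by positivity)
  have hb_anti : AntitoneOn b (Set.Ici 3) := fun i hi j hj hij => by
    have hexp : Real.exp s⁻¹ ≤ 3 :=
      (Real.exp_le_exp.2 (inv_le_one_of_one_le₀ hs.le)).trans (by linarith [Real.exp_one_lt_d9])
    exact Real.log_div_self_rpow_antitoneOn (by linarith) (hexp.trans (by exact_mod_cast hi))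
      (hexp.trans (by exact_mod_cast hj)) (by exact_mod_cast hij)
  have hhead : ‖∑ n ∈ range 3, (b n : ℂ) * χ n‖ ≤ 1 := by
    have : ∑ n ∈ range 3, (b n : ℂ) * χ n = b 2 * χ 2 := by simp [sum_range_succ, hb]
    rw [this, norm_mul, Complex.norm_of_nonneg (hb_nonneg 2)]
    exact mul_le_one₀ (hb_le_one (by norm_num)) (norm_nonneg _) (χ.norm_le_one _)
  have htail := norm_sub_sum_range_mul_character_le hχ hb_anti (fun n _ => hb_nonneg n)
    (hasSum_deriv_LFunction_ofReal χ hs).tendsto_sum_nat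
  have hq : (1 : ℝ) ≤ q := by exact_mod_cast NeZero.one_le
  have hb3 : q * b 3 ≤ q * 1 := by gcongr; exact hb_le_one (by norm_num)
  rw [← norm_neg]
  linarith [norm_le_norm_add_norm_sub' (-deriv χ.LFunction s) (∑ n ∈ range 3, (b n : ℂ) * χ n)]

lemma norm_LFunction_sub_le (hχ : χ ≠ 1) {s t : ℝ} (hs : 1 ≤ s) (ht : 1 ≤ t) :
    ‖χ.LFunction s - χ.LFunction t‖ ≤ 2 * q * |s - t| := by
  have hdiff := DirichletCharacter.differentiable_LFunction hχ
  have hbound (x : ℝ) (hx : 1 ≤ x) : ‖deriv χ.LFunction x‖ ≤ 2 * q :=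
    le_on_closure (s := Set.Ioi 1) (fun y hy => norm_deriv_LFunction_le hχ hy)
      ((hdiff.contDiff.continuous_deriv le_rfl).comp Complex.continuous_ofReal).norm.continuousOn
      continuousOn_const (x := x) (by simpa using hx)
  exact Convex.norm_image_sub_le_of_norm_hasDerivWithin_le (𝕜 := ℝ)
    (fun x _ => (hdiff x).hasDerivAt.comp_ofReal.hasDerivWithinAt) hbound (convex_Ici 1) ht hs

end LFunction

/-! ### Lambert series and quadratic characters -/

section Lambert

variable {c : ℕ → ℂ} {B : ℝ} {z : ℂ}

lemma summable_mul_pow_mul (hc : ∀ n, ‖c n‖ ≤ B) (hz : ‖z‖ < 1) :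
    Summable fun p : ℕ+ × ℕ+ => c p.1 * z ^ (p.1 * p.2 : ℕ) := by
  have hsum := (summable_prod_mul_pow 0 (r := ‖z‖) (by simpa using hz)).mul_left B
  refine .of_norm_bounded hsum fun p => ?_
  rw [norm_mul, norm_pow, pow_zero, one_mul]
  gcongr
  exact hc _

lemma hasSum_pow_mul_pnat (hz : ‖z‖ < 1) (d : ℕ+) :
    HasSum (fun m : ℕ+ => z ^ (d * m : ℕ)) (z ^ (d : ℕ) / (1 - z ^ (d : ℕ))) := by
  have hzd : ‖z ^ (d : ℕ)‖ < 1 := by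
    rw [norm_pow]
    exact pow_lt_one₀ (norm_nonneg _) hz d.ne_zero
  have hne : 1 - z ^ (d : ℕ) ≠ 0 := sub_ne_zero.2 fun h => by simp [← h] at hzd
  have hgeom : HasSum (fun m : ℕ => z ^ (d * m : ℕ)) (1 - z ^ (d : ℕ))⁻¹ := by
    simpa only [pow_mul] using hasSum_geometric_of_norm_lt_one hzd
  refine (hasSum_pnat_iff (f := fun m : ℕ => z ^ (d * m : ℕ))).2 ?_
  convert! hgeom using 1
  rw [mul_zero, pow_zero]
  field_simp
  ring

lemma hasSum_lambert (hc : ∀ n, ‖c n‖ ≤ B) (hz : ‖z‖ < 1) :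
    HasSum (fun d : ℕ => c d * (z ^ d / (1 - z ^ d)))
      (∑' p : ℕ+ × ℕ+, c p.1 * z ^ (p.1 * p.2 : ℕ)) := by
  have hsum := (summable_mul_pow_mul hc hz).hasSum.prod_fiberwise fun d =>
    (hasSum_pow_mul_pnat hz d).mul_left (c d)
  simpa using (hasSum_pnat_iff (f := fun d : ℕ => c d * (z ^ d / (1 - z ^ d)))).1 hsum

lemma hasSum_sum_divisors_mul_pow (hc : ∀ n, ‖c n‖ ≤ B) (hz : ‖z‖ < 1) :
    HasSum (fun n : ℕ => (∑ d ∈ n.divisors, c d) * z ^ n)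
      (∑' p : ℕ+ × ℕ+, c p.1 * z ^ (p.1 * p.2 : ℕ)) := by
  suffices h : HasSum (fun n : ℕ+ => (∑ d ∈ (n : ℕ).divisors, c d) * z ^ (n : ℕ))
      (∑' p : ℕ+ × ℕ+, c p.1 * z ^ (p.1 * p.2 : ℕ)) by
    simpa using (hasSum_pnat_iff (f := fun n : ℕ => (∑ d ∈ n.divisors, c d) * z ^ n)).1 h
  have hsum := sigmaAntidiagonalEquivProd.hasSum_iff.2 (summable_mul_pow_mul hc hz).hasSum
  refine hsum.sigma fun n => ?_
  convert! hasSum_fintype fun x : (n : ℕ).divisorsAntidiagonal => c x.1.1 * z ^ (x.1.1 * x.1.2)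
    using 1
  rw [univ_eq_attach, (n : ℕ).divisorsAntidiagonal.sum_attach fun x => c x.1 * z ^ (x.1 * x.2),
    Nat.sum_divisorsAntidiagonal fun x y => c x * z ^ (x * y), sum_mul]
  refine sum_congr rfl fun d hd => ?_
  rw [Nat.mul_div_cancel' (Nat.dvd_of_mem_divisors hd)]

end Lambert

section BernoulliKernel

lemma sq_mul_exp_le_sq_exp_sub_one {x : ℝ} (hx : 0 ≤ x) :
    x ^ 2 * Real.exp x ≤ (Real.exp x - 1) ^ 2 := by
  have hsinh := Real.self_le_sinh_iff.2 (by positivity : 0 ≤ x / 2)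
  have hexp : Real.exp x = Real.exp (x / 2) ^ 2 := by rw [← Real.exp_nat_mul]; ring_nf
  have hle : x * Real.exp (x / 2) ≤ Real.exp x - 1 := by
    rw [Real.sinh_eq, Real.exp_neg] at hsinh
    have := Real.exp_pos (x / 2)
    rw [hexp]
    field_simp at hsinh
    linarith
  calc x ^ 2 * Real.exp x = (x * Real.exp (x / 2)) ^ 2 := by rw [hexp]; ring
    _ ≤ (Real.exp x - 1) ^ 2 := by gcongr

lemma antitoneOn_inv_sub_inv_exp_sub_one :
    AntitoneOn (fun x : ℝ => x⁻¹ - (Real.exp x - 1)⁻¹) (Set.Ioi 0) := by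
  have hpos {x : ℝ} (hx : x ∈ Set.Ioi 0) : 0 < Real.exp x - 1 :=
    sub_pos.2 (Real.one_lt_exp_iff.2 hx)
  have hderiv (x : ℝ) (hx : x ∈ Set.Ioi 0) :
      HasDerivAt (fun x : ℝ => x⁻¹ - (Real.exp x - 1)⁻¹)
        (-(x ^ 2)⁻¹ - -Real.exp x / (Real.exp x - 1) ^ 2) x :=
    (hasDerivAt_inv (ne_of_gt hx)).sub (((Real.hasDerivAt_exp x).sub_const 1).inv (hpos hx).ne')
  refine antitoneOn_of_hasDerivWithinAt_nonpos (convex_Ioi 0)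
    (fun x hx => (hderiv x hx).continuousAt.continuousWithinAt)
    (fun x hx => (hderiv x (interior_subset hx)).hasDerivWithinAt) fun x hx => ?_
  rw [interior_Ioi] at hx
  have hx₀ : 0 < x := hx
  have hexp := hpos hx
  rw [neg_div, sub_neg_eq_add, neg_add_nonpos_iff, inv_eq_one_div,
    div_le_div_iff₀ (by positivity) (by positivity)]
  linarith [sq_mul_exp_le_sq_exp_sub_one hx₀.le]

lemma inv_sub_inv_exp_sub_one_nonneg {x : ℝ} (hx : 0 < x) : 0 ≤ x⁻¹ - (Real.exp x - 1)⁻¹ :=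
  sub_nonneg.2 (inv_anti₀ hx (by linarith [Real.add_one_le_exp x]))

lemma inv_sub_inv_exp_sub_one_le_one {x : ℝ} (hx : 0 < x) : x⁻¹ - (Real.exp x - 1)⁻¹ ≤ 1 := by
  have hpos : 0 < Real.exp x - 1 := sub_pos.2 (Real.one_lt_exp_iff.2 hx)
  have hle : 1 - x ≤ (Real.exp x)⁻¹ := by
    rw [← Real.exp_neg]
    linarith [Real.add_one_le_exp (-x)]
  have hmul : (1 - x) * Real.exp x ≤ 1 := by
    rwa [← le_div_iff₀ (Real.exp_pos x), one_div]
  rw [sub_le_iff_le_add, inv_le_iff_one_le_mul₀ hx, add_mul, one_mul, inv_mul_eq_div,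
    ← sub_le_iff_le_add', le_div_iff₀ hpos]
  linarith

end BernoulliKernel

section Quadratic

variable {q : ℕ} {χ : DirichletCharacter ℂ q}

open scoped ComplexOrder in
lemma one_le_zetaMul_prime_pow (hχ : χ ^ 2 = 1) {p : ℕ} (hp : p.Prime) (j : ℕ) :
    1 ≤ χ.zetaMul (p ^ (2 * j)) := by
  have hval : χ.zetaMul (p ^ (2 * j)) = 1 + ∑ k ∈ range (2 * j), χ p ^ (k + 1) := by
    rw [DirichletCharacter.zetaMul, ArithmeticFunction.coe_zeta_mul_apply,
      Nat.sum_divisors_prime_pow hp, sum_range_succ', add_comm]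
    simp [toArithmeticFunction, hp.ne_zero]
  rw [hval]
  refine le_add_of_nonneg_right ?_
  rcases MulChar.isQuadratic_iff_sq_eq_one.mpr hχ p with h | h | h
  · simp [h]
  · rw [h]
    exact sum_nonneg fun _ _ => by simp
  · simp [h, pow_succ, neg_one_geom_sum]

open scoped ComplexOrder in
lemma one_le_zetaMul_sq (hχ : χ ^ 2 = 1) {m : ℕ} (hm : m ≠ 0) : 1 ≤ χ.zetaMul (m ^ 2) := by
  rw [χ.isMultiplicative_zetaMul.multiplicative_factorization _ (pow_ne_zero 2 hm), Finsupp.prod]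
  refine prod_induction _ (fun x : ℂ => 1 ≤ x) (fun _ _ => one_le_mul_of_one_le_of_one_le) le_rfl
    fun p hp => ?_
  rw [Nat.factorization_pow]
  exact one_le_zetaMul_prime_pow hχ (Nat.prime_of_mem_primeFactors (by simpa using hp)) _

lemma half_le_re_of_hasSum_zetaMul (hχ : χ ^ 2 = 1) {ε : ℝ} {J : ℕ}
    (hε : 0 ≤ ε) (hJ : ε * J ^ 2 ≤ 1 / 2) {T : ℂ}
    (hT : HasSum (fun n : ℕ => χ.zetaMul n * (Real.exp (-ε) : ℂ) ^ n) T) :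
    (J : ℝ) / 2 ≤ T.re := by
  have hterm (n : ℕ) : (χ.zetaMul n * (Real.exp (-ε) : ℂ) ^ n).re =
      (χ.zetaMul n).re * Real.exp (-(ε * n)) := by
    rw [← Complex.ofReal_pow, Complex.re_mul_ofReal, ← Real.exp_nat_mul]
    ring_nf
  have hre := Complex.hasSum_re hT
  simp only [hterm] at hre
  have hinj : Set.InjOn (fun i : ℕ => (i + 1) ^ 2) (range J) := fun i _ j _ hij => by
    simpa using hij
  calc (J : ℝ) / 2 = ∑ i ∈ range J, (1 / 2 : ℝ) := by simp; ring
    _ ≤ ∑ i ∈ range J, (χ.zetaMul ((i + 1) ^ 2)).re * Real.exp (-(ε * ((i + 1) ^ 2 : ℕ))) := by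
        refine sum_le_sum fun i hi => ?_
        have hone : 1 ≤ (χ.zetaMul ((i + 1) ^ 2)).re :=
          (Complex.le_def.1 (one_le_zetaMul_sq hχ i.succ_ne_zero)).1
        have hiJ : (i : ℝ) + 1 ≤ J := by exact_mod_cast mem_range.1 hi
        have hexp : 1 / 2 ≤ Real.exp (-(ε * ((i + 1) ^ 2 : ℕ))) := by
          have : ε * ((i + 1) ^ 2 : ℕ) ≤ ε * J ^ 2 := by push_cast; gcongr
          linarith [Real.add_one_le_exp (-(ε * ((i + 1) ^ 2 : ℕ)))]
        nlinarith
    _ = ∑ n ∈ (range J).image fun i => (i + 1) ^ 2, (χ.zetaMul n).re * Real.exp (-(ε * n)) :=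
        by rw [sum_image hinj]
    _ ≤ T.re := sum_le_hasSum _ (fun n _ => mul_nonneg
        (Complex.le_def.1 (DirichletCharacter.zetaMul_nonneg hχ n)).1 (Real.exp_pos _).le) hre

lemma exists_hasSum_quadratic_lambert (χ : DirichletCharacter ℂ q) {ε : ℝ} (hε : 0 < ε) :
    ∃ T, HasSum (fun n : ℕ => (((Real.exp (ε * n) - 1)⁻¹ : ℝ) : ℂ) * χ n) T ∧
      HasSum (fun n : ℕ => χ.zetaMul n * (Real.exp (-ε) : ℂ) ^ n) T := by
  have hz : ‖(Real.exp (-ε) : ℂ)‖ < 1 := by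
    rw [Complex.norm_of_nonneg (Real.exp_pos _).le]
    exact Real.exp_lt_one_iff.2 (neg_lt_zero.2 hε)
  have hc (n : ℕ) : ‖toArithmeticFunction (χ ·) n‖ ≤ 1 := by
    by_cases hn : n = 0 <;> simp [toArithmeticFunction, hn, χ.norm_le_one]
  refine ⟨_, (hasSum_lambert hc hz).congr_fun fun n => ?_,
    (hasSum_sum_divisors_mul_pow hc hz).congr_fun fun n => ?_⟩
  · rcases eq_or_ne n 0 with rfl | hn
    · simp
    · have hne : Real.exp (ε * n) - 1 ≠ 0 := by
        have : 0 < ε * n := by positivity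
        exact (sub_pos.2 (Real.one_lt_exp_iff.2 this)).ne'
      have hpow : Real.exp (-ε) ^ n = (Real.exp (ε * n))⁻¹ := by
        rw [← Real.exp_nat_mul, ← Real.exp_neg]; ring_nf
      have : Real.exp (-ε) ^ n / (1 - Real.exp (-ε) ^ n) = (Real.exp (ε * n) - 1)⁻¹ := by
        rw [hpow]
        field_simp
      rw [← this]
      simp [toArithmeticFunction, hn, mul_comm]
  · rw [DirichletCharacter.zetaMul, ArithmeticFunction.coe_zeta_mul_apply]

lemma norm_inv_mul_LFunction_one_sub_le [NeZero q] (hχ : χ ≠ 1) {ε : ℝ} (hε : 0 < ε) {T : ℂ}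
    (hT : HasSum (fun n : ℕ => (((Real.exp (ε * n) - 1)⁻¹ : ℝ) : ℂ) * χ n) T) :
    ‖(ε⁻¹ : ℂ) * χ.LFunction 1 - T‖ ≤ q := by
  set b : ℕ → ℝ := fun n => (ε * n)⁻¹ - (Real.exp (ε * n) - 1)⁻¹ with hb
  have hpos {n : ℕ} (hn : n ∈ Set.Ici 1) : 0 < ε * n :=
    mul_pos hε (by exact_mod_cast Nat.lt_of_succ_le hn)
  have hlim : Tendsto (fun M => ∑ n ∈ range M, (b n : ℂ) * χ n) atTop
      (𝓝 ((ε⁻¹ : ℂ) * χ.LFunction 1 - T)) := by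
    refine (((tendsto_sum_range_LFunction_one hχ).const_mul _).sub hT.tendsto_sum_nat).congr
      fun M => ?_
    rw [mul_sum, ← sum_sub_distrib]
    refine sum_congr rfl fun n _ => ?_
    simp only [hb, mul_inv]
    push_cast
    ring
  have hdist := norm_sub_sum_range_mul_character_le hχ (b := b) (m := 1)
    (fun i hi j hj hij => antitoneOn_inv_sub_inv_exp_sub_one (hpos hi) (hpos hj) (by gcongr))
    (fun n hn => inv_sub_inv_exp_sub_one_nonneg (hpos hn)) hlim
  have hb₀ : b 0 = 0 := by simp [hb]
  rw [sum_range_one, hb₀, Complex.ofReal_zero, zero_mul, sub_zero] at hdist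
  exact hdist.trans (mul_le_of_le_one_right (Nat.cast_nonneg q)
    (inv_sub_inv_exp_sub_one_le_one (hpos Set.self_mem_Ici)))

lemma one_div_le_norm_LFunction_one [NeZero q] (hχ : χ ≠ 1) (hχ2 : χ ^ 2 = 1) :
    1 / (32 * (q : ℝ)) ≤ ‖χ.LFunction 1‖ := by
  have hq : (0 : ℝ) < q := by exact_mod_cast NeZero.pos q
  obtain ⟨ε, hε⟩ : ∃ ε : ℝ, ε = 1 / (32 * (q : ℝ) ^ 2) := ⟨_, rfl⟩
  have hε₀ : 0 < ε := by rw [hε]; positivity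
  obtain ⟨T, hT, hT'⟩ := exists_hasSum_quadratic_lambert χ hε₀
  have hre : (2 * q : ℝ) ≤ T.re := by
    have hJ : ε * (4 * q : ℕ) ^ 2 ≤ 1 / 2 := by
      rw [hε]
      push_cast
      field_simp
      norm_num
    have := half_le_re_of_hasSum_zetaMul hχ2 hε₀.le hJ hT'
    push_cast at this
    linarith
  have hnorm : 2 * q ≤ ‖χ.LFunction 1‖ / ε + q :=
    calc (2 * q : ℝ) ≤ ‖T‖ := hre.trans (Complex.re_le_norm T)
      _ ≤ ‖(ε⁻¹ : ℂ) * χ.LFunction 1‖ + ‖(ε⁻¹ : ℂ) * χ.LFunction 1 - T‖ :=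
        norm_le_norm_add_norm_sub _ _
      _ ≤ ‖χ.LFunction 1‖ / ε + q := by
        rw [norm_mul, norm_inv, Complex.norm_of_nonneg hε₀.le, inv_mul_eq_div]
        gcongr
        exact norm_inv_mul_LFunction_one_sub_le hχ hε₀ hT
  calc 1 / (32 * (q : ℝ)) = q * ε := by rw [hε]; field_simp
    _ ≤ ‖χ.LFunction 1‖ := by
      rw [← le_div_iff₀ hε₀]
      linarith

end Quadratic

/-! ### Logarithmic derivatives near `s = 1` -/

lemma sum_range_inv_succ_rpow_le {s : ℝ} (hs : 1 < s) (M : ℕ) :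
    ∑ n ∈ range M, (((n + 1 : ℕ) : ℝ) ^ s)⁻¹ ≤ s / (s - 1) := by
  have hs₁ : 0 < s - 1 := sub_pos.2 hs
  have htail (M : ℕ) : ∑ n ∈ range M, (((n + 1 + 1 : ℕ) : ℝ) ^ s)⁻¹ ≤ 1 / (s - 1) :=
    calc ∑ n ∈ range M, (((n + 1 + 1 : ℕ) : ℝ) ^ s)⁻¹
        = ∑ n ∈ range M, (1 + (n + 1 : ℕ) : ℝ) ^ (-s) := by
          refine sum_congr rfl fun n _ => ?_
          rw [← Real.rpow_neg (Nat.cast_nonneg _)]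
          push_cast
          ring_nf
      _ ≤ ∫ x in (1 : ℝ)..1 + M, x ^ (-s) :=
          AntitoneOn.sum_le_integral fun x hx y _ hxy =>
            Real.rpow_le_rpow_of_nonpos (by linarith [hx.1]) hxy (by linarith)
      _ = (1 - (1 + (M : ℝ)) ^ (1 - s)) / (s - 1) := by
          rw [integral_rpow (.inr ⟨by linarith, ?_⟩), Real.one_rpow, neg_add_eq_sub,
            ← neg_div_neg_eq, neg_sub, neg_sub]
          rw [Set.uIcc_of_le (by simp)]
          exact fun h => by linarith [h.1]
      _ ≤ 1 / (s - 1) := by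
          gcongr
          exact sub_le_self _ (by positivity)
  have hs_eq : s / (s - 1) = 1 / (s - 1) + 1 := by field_simp; ring
  rcases M with _ | M
  · simpa using div_nonneg (by linarith) hs₁.le
  · rw [sum_range_succ', hs_eq]
    simpa using htail M

section LogDeriv

variable {q : ℕ} [NeZero q] {χ : DirichletCharacter ℂ q}

lemma norm_LFunction_le_div (χ : DirichletCharacter ℂ q) {s : ℝ} (hs : 1 < s) :
    ‖χ.LFunction s‖ ≤ s / (s - 1) := by
  have hsum := (hasSum_nat_add_iff' 1).2 (hasSum_LFunction_ofReal χ hs)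
  rw [sum_range_one, Nat.cast_zero, Real.zero_rpow (by linarith), inv_zero, Complex.ofReal_zero,
    zero_mul, sub_zero] at hsum
  refine le_of_tendsto hsum.tendsto_sum_nat.norm (.of_forall fun M => ?_)
  refine (norm_sum_le_of_le _ fun n _ => ?_).trans (sum_range_inv_succ_rpow_le hs M)
  rw [norm_mul, Complex.norm_of_nonneg (by positivity)]
  exact mul_le_of_le_one_right (by positivity) (χ.norm_le_one _)

lemma cube_div_le_norm_LFunction_pow_four (hχ : χ ^ 2 ≠ 1) {x : ℝ} (hx₀ : 0 < x) (hx₁ : x ≤ 1) :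
    x ^ 3 / (8 * q) ≤ ‖χ.LFunction (1 + x : ℝ)‖ ^ 4 := by
  have hq : (0 : ℝ) < q := by exact_mod_cast NeZero.pos q
  have hprod : 1 ≤ ‖(1 : DirichletCharacter ℂ q).LFunction (1 + x : ℝ)‖ ^ 3 *
      ‖χ.LFunction (1 + x : ℝ)‖ ^ 4 * ‖(χ ^ 2).LFunction (1 + x : ℝ)‖ := by
    simpa using DirichletCharacter.norm_LFunction_product_ge_one (χ := χ) hx₀ 0
  have hone : ‖(1 : DirichletCharacter ℂ q).LFunction (1 + x : ℝ)‖ ≤ 2 / x := by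
    refine (norm_LFunction_le_div 1 (by linarith)).trans ?_
    rw [add_sub_cancel_left]
    gcongr
    linarith
  have hsq : ‖(χ ^ 2).LFunction (1 + x : ℝ)‖ ≤ q := norm_LFunction_le hχ (by linarith)
  rw [div_le_iff₀ (by positivity)]
  calc x ^ 3 ≤ x ^ 3 * ((2 / x) ^ 3 * ‖χ.LFunction (1 + x : ℝ)‖ ^ 4 * q) :=
        le_mul_of_one_le_right (by positivity) (hprod.trans (by gcongr))
    _ = ‖χ.LFunction (1 + x : ℝ)‖ ^ 4 * (8 * q) := by field_simp; ring

/-- An explicit polynomial in `q` which, for every nontrivial character `χ` mod `q`, bounds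
`L'/L(s, χ)` for real `s > 1` within distance `(logDerivBound q)⁻¹` of `1`. -/
noncomputable def logDerivBound (q : ℕ) : ℝ := 2 ^ 11 * (q : ℝ) ^ 5

lemma natCast_le_logDerivBound : q ≤ logDerivBound q := by
  have hq : (1 : ℝ) ≤ q := by exact_mod_cast NeZero.one_le
  have := le_self_pow₀ hq (show 5 ≠ 0 by norm_num)
  rw [logDerivBound]
  linarith

lemma one_le_logDerivBound : 1 ≤ logDerivBound q :=
  (by exact_mod_cast NeZero.one_le : (1 : ℝ) ≤ q).trans natCast_le_logDerivBound

lemma one_div_logDerivBound_le_one : 1 / logDerivBound q ≤ 1 :=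
  (div_le_one (zero_lt_one.trans_le one_le_logDerivBound)).2 one_le_logDerivBound

lemma le_norm_LFunction_add_inv_logDerivBound (hχ : χ ^ 2 ≠ 1) :
    4 * q / logDerivBound q ≤ ‖χ.LFunction (1 + 1 / logDerivBound q : ℝ)‖ := by
  have hK := one_le_logDerivBound (q := q)
  have hq : (0 : ℝ) < q := by exact_mod_cast NeZero.pos q
  have h := cube_div_le_norm_LFunction_pow_four hχ (x := 1 / logDerivBound q) (by positivity)
    one_div_logDerivBound_le_one
  refine le_of_pow_le_pow_left₀ four_ne_zero (norm_nonneg _) (le_trans (le_of_eq ?_) h)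
  rw [logDerivBound]
  field_simp
  norm_num

lemma le_norm_LFunction_one (hχ : χ ≠ 1) (hχ2 : χ ^ 2 = 1) :
    4 * q / logDerivBound q ≤ ‖χ.LFunction 1‖ := by
  have hq : (1 : ℝ) ≤ q := by exact_mod_cast NeZero.one_le
  refine le_trans ?_ (one_div_le_norm_LFunction_one hχ hχ2)
  rw [logDerivBound, div_le_div_iff₀ (by positivity) (by positivity)]
  have := pow_le_pow_right₀ hq (show 2 ≤ 5 by norm_num)
  nlinarith

lemma le_norm_LFunction (hχ : χ ≠ 1) {s : ℝ} (hs : 1 ≤ s) (hs' : s ≤ 1 + 1 / logDerivBound q) :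
    2 * q / logDerivBound q ≤ ‖χ.LFunction s‖ := by
  obtain ⟨t, ht₁, ht, hLt⟩ : ∃ t : ℝ, 1 ≤ t ∧ |t - s| ≤ 1 / logDerivBound q ∧
      4 * q / logDerivBound q ≤ ‖χ.LFunction t‖ := by
    by_cases hχ2 : χ ^ 2 = 1
    · refine ⟨1, le_rfl, ?_, by simpa using le_norm_LFunction_one hχ hχ2⟩
      rw [abs_le]
      constructor <;> linarith
    · refine ⟨1 + 1 / logDerivBound q, by linarith, ?_, le_norm_LFunction_add_inv_logDerivBound hχ2⟩
      rw [abs_le]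
      constructor <;> linarith
  have hlip : ‖χ.LFunction t - χ.LFunction s‖ ≤ 2 * q / logDerivBound q :=
    (norm_LFunction_sub_le hχ ht₁ hs).trans (by rw [← mul_one_div]; gcongr)
  have htri := norm_sub_norm_le (χ.LFunction t) (χ.LFunction s)
  have : 4 * q / logDerivBound q = 2 * (2 * q / logDerivBound q) := by ring
  linarith

lemma norm_logDeriv_LFunction_le (hχ : χ ≠ 1) {s : ℝ} (hs : 1 < s)
    (hs' : s ≤ 1 + 1 / logDerivBound q) :
    ‖logDeriv χ.LFunction s‖ ≤ logDerivBound q := by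
  have hK := one_le_logDerivBound (q := q)
  have hq : (0 : ℝ) < q := by exact_mod_cast NeZero.pos q
  have hL := le_norm_LFunction hχ hs.le hs'
  have hL₀ : 0 < ‖χ.LFunction s‖ := lt_of_lt_of_le (by positivity) hL
  rw [logDeriv_apply, norm_div, div_le_iff₀ hL₀, ← div_le_iff₀' (by linarith)]
  refine le_trans ?_ hL
  gcongr
  exact norm_deriv_LFunction_le hχ hs

end LogDeriv

/-! ### Sums of the von Mangoldt function -/

section VonMangoldtSum

open ArithmeticFunction

/-- The sum `∑ Λ(n) / n ^ s` over the elements `n` of `S`. -/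
noncomputable def vonMangoldtSum (S : Set ℕ) (s : ℝ) : ℝ :=
  ∑' n : ℕ, S.indicator (fun n : ℕ => vonMangoldt n / (n : ℝ) ^ s) n

lemma vonMangoldt_div_rpow_nonneg (n : ℕ) (s : ℝ) : 0 ≤ vonMangoldt n / (n : ℝ) ^ s :=
  div_nonneg vonMangoldt_nonneg (by positivity)

lemma vonMangoldt_div_rpow_le_one {s : ℝ} (hs : 1 ≤ s) (n : ℕ) :
    vonMangoldt n / (n : ℝ) ^ s ≤ 1 := by
  rcases Nat.eq_zero_or_pos n with rfl | hn
  · simp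
  · refine le_trans ?_ (log_div_rpow_le_one (x := n) (by exact_mod_cast hn) hs)
    gcongr
    exact vonMangoldt_le_log

lemma indicator_vonMangoldt_div_rpow (S : Set ℕ) (s : ℝ) (n : ℕ) :
    S.indicator (fun n : ℕ => vonMangoldt n / (n : ℝ) ^ s) n =
      S.indicator (vonMangoldt ·) n / (n : ℝ) ^ s := by
  by_cases hn : n ∈ S <;> simp [hn]

lemma ofReal_vonMangoldtSum (S : Set ℕ) (s : ℝ) :
    (vonMangoldtSum S s : ℂ) = LSeries (fun n => (S.indicator (vonMangoldt ·) n : ℝ)) s := by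
  rw [vonMangoldtSum, LSeries, Complex.ofReal_tsum]
  refine tsum_congr fun n => ?_
  rw [indicator_vonMangoldt_div_rpow]
  rcases eq_or_ne n 0 with rfl | hn
  · by_cases h₀ : 0 ∈ S <;> simp [h₀]
  · rw [LSeries.term_of_ne_zero hn, Complex.ofReal_div, Complex.ofReal_cpow (Nat.cast_nonneg n),
      Complex.ofReal_natCast]

lemma summable_indicator_vonMangoldt (S : Set ℕ) {s : ℝ} (hs : 1 < s) :
    Summable (S.indicator fun n : ℕ => vonMangoldt n / (n : ℝ) ^ s) := by
  refine Summable.indicator ?_ S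
  have hsum := (LSeriesSummable_vonMangoldt (s := s) (by simpa using hs)).norm
  refine hsum.congr fun n => ?_
  rcases eq_or_ne n 0 with rfl | hn
  · simp
  · rw [LSeries.norm_term_eq, if_neg hn, Complex.norm_of_nonneg vonMangoldt_nonneg,
      Complex.ofReal_re]

lemma vonMangoldtSum_le_add {S T U : Set ℕ} (h : S ⊆ T ∪ U) {s : ℝ} (hs : 1 < s) :
    vonMangoldtSum S s ≤ vonMangoldtSum T s + vonMangoldtSum U s := by
  have hT := summable_indicator_vonMangoldt T hs
  have hU := summable_indicator_vonMangoldt U hs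
  rw [vonMangoldtSum, vonMangoldtSum, vonMangoldtSum, ← hT.tsum_add hU]
  refine (summable_indicator_vonMangoldt S hs).tsum_le_tsum (fun n => ?_) (hT.add hU)
  have hn := vonMangoldt_div_rpow_nonneg n s
  have hmem := @h n
  by_cases hS : n ∈ S <;> by_cases hT : n ∈ T <;> by_cases hU : n ∈ U <;> simp_all

lemma vonMangoldtSum_finset_le (F : Finset ℕ) {s : ℝ} (hs : 1 ≤ s) :
    vonMangoldtSum F s ≤ #F := by
  rw [vonMangoldtSum, ← sum_eq_tsum_indicator]
  simpa using sum_le_sum fun n (_ : n ∈ F) => vonMangoldt_div_rpow_le_one hs n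

lemma residueClass_one_eq_univ : {n : ℕ | (n : ZMod 1) = 1} = Set.univ :=
  Set.eq_univ_of_forall fun n => Subsingleton.elim (n : ZMod 1) 1

lemma exists_vonMangoldtSum_not_prime_le :
    ∃ C, ∀ s > 1, vonMangoldtSum {n | ¬ n.Prime} s ≤ C := by
  have hsum := vonMangoldt.summable_residueClass_non_primes_div (1 : ZMod 1)
  refine ⟨_, fun s hs => (summable_indicator_vonMangoldt _ hs).tsum_le_tsum (fun n => ?_) hsum⟩
  have hclass : vonMangoldt.residueClass (1 : ZMod 1) n = vonMangoldt n := by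
    rw [vonMangoldt.residueClass, residueClass_one_eq_univ, Set.indicator_univ]
  rw [hclass]
  by_cases hp : n.Prime
  · simp [hp]
  rw [Set.indicator_of_mem hp, if_neg hp]
  rcases Nat.eq_zero_or_pos n with rfl | hn
  · simp
  · have : (0 : ℝ) ≤ vonMangoldt n := vonMangoldt_nonneg
    gcongr
    exact Real.self_le_rpow_of_one_le (by exact_mod_cast hn) hs.le

lemma exists_le_vonMangoldtSum_univ :
    ∃ C, ∀ s ∈ Set.Ioc (1 : ℝ) 2, 1 / (s - 1) - C ≤ vonMangoldtSum Set.univ s := by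
  obtain ⟨C, hC⟩ := vonMangoldt.LSeries_residueClass_lower_bound (q := 1) (a := 1) isUnit_one
  refine ⟨C, fun s hs => ?_⟩
  simpa only [vonMangoldtSum, indicator_vonMangoldt_div_rpow, vonMangoldt.residueClass,
    residueClass_one_eq_univ, Nat.totient_one, Nat.cast_one, inv_one] using hC hs

lemma exists_le_vonMangoldtSum_isUnit :
    ∃ C, ∀ (q : ℕ) [NeZero q], ∀ s ∈ Set.Ioc (1 : ℝ) 2,
      1 / (s - 1) - C - q ≤ vonMangoldtSum {n | IsUnit (n : ZMod q)} s := by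
  obtain ⟨C₁, hC₁⟩ := exists_le_vonMangoldtSum_univ
  obtain ⟨C₂, hC₂⟩ := exists_vonMangoldtSum_not_prime_le
  refine ⟨C₁ + C₂, fun q _ s hs => ?_⟩
  have hdvd {p : ℕ} (hp : p.Prime) (hu : ¬ IsUnit (p : ZMod q)) : p ∈ q.divisors := by
    rw [ZMod.isUnit_iff_coprime, hp.coprime_iff_not_dvd, not_not] at hu
    exact Nat.mem_divisors.2 ⟨hu, NeZero.ne q⟩
  have hcover : (Set.univ : Set ℕ) ⊆ {n | IsUnit (n : ZMod q)} ∪ ({n | ¬ n.Prime} ∪ q.divisors) :=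
    fun n _ => or_iff_not_imp_left.2 fun hu => or_iff_not_imp_left.2 fun hp =>
      hdvd (not_not.1 hp) hu
  have hcard : (#q.divisors : ℝ) ≤ q := by exact_mod_cast Nat.card_divisors_le_self q
  linarith [hC₁ s hs, hC₂ s hs.1, vonMangoldtSum_le_add hcover hs.1,
    vonMangoldtSum_le_add (subset_refl ({n | ¬ n.Prime} ∪ (q.divisors : Set ℕ))) hs.1,
    vonMangoldtSum_finset_le q.divisors hs.1.le]

variable {q : ℕ} [NeZero q]

lemma ofReal_vonMangoldtSum_isUnit {s : ℝ} (hs : 1 < s) :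
    (vonMangoldtSum {n | IsUnit (n : ZMod q)} s : ℂ) =
      -logDeriv (1 : DirichletCharacter ℂ q).LFunction s := by
  have hs' : 1 < (s : ℂ).re := by simpa using hs
  rw [ofReal_vonMangoldtSum, logDeriv_apply,
    DirichletCharacter.deriv_LFunction_eq_deriv_LSeries _ hs',
    DirichletCharacter.LFunction_eq_LSeries _ hs', ← neg_div,
    ← DirichletCharacter.LSeries_twist_vonMangoldt_eq _ hs']
  refine LSeries_congr (fun {n} _ => ?_) _
  by_cases hu : IsUnit (n : ZMod q)
  · simp [hu, MulChar.one_apply hu]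
  · simp [hu, MulChar.map_nonunit _ hu]

open scoped Classical in
lemma ofReal_vonMangoldtSum_eq_sub {a : ZMod q} (ha : IsUnit a) {s : ℝ} (hs : 1 < s) :
    (vonMangoldtSum {n | (n : ZMod q) = a} s : ℂ) =
      (q.totient : ℂ)⁻¹ * (vonMangoldtSum {n | IsUnit (n : ZMod q)} s -
        ∑ χ ∈ ({1}ᶜ : Finset (DirichletCharacter ℂ q)), χ a⁻¹ * logDeriv χ.LFunction s) := by
  have hinv : IsUnit a⁻¹ := .of_mul_eq_one a (ZMod.inv_mul_of_unit a ha)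
  have hclass := vonMangoldt.LSeries_residueClass_eq ha (s := s) (by simpa using hs)
  rw [Fintype.sum_eq_add_sum_compl 1, MulChar.one_apply hinv, one_mul] at hclass
  rw [ofReal_vonMangoldtSum, ofReal_vonMangoldtSum_isUnit hs]
  simp only [logDeriv_apply]
  rw [← vonMangoldt.residueClass.eq_def, hclass]
  ring

open scoped Classical in
lemma norm_sum_mul_logDeriv_LFunction_le (a : ZMod q) {s : ℝ} (hs : 1 < s)
    (hs' : s ≤ 1 + 1 / logDerivBound q) :
    ‖∑ χ ∈ ({1}ᶜ : Finset (DirichletCharacter ℂ q)), χ a * logDeriv χ.LFunction s‖ ≤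
      q.totient * logDerivBound q := by
  have hle (χ : DirichletCharacter ℂ q) (hχ : χ ∈ ({1}ᶜ : Finset (DirichletCharacter ℂ q))) :
      ‖χ a * logDeriv χ.LFunction s‖ ≤ logDerivBound q := by
    rw [norm_mul]
    exact (mul_le_of_le_one_left (norm_nonneg _) (χ.norm_le_one a)).trans
      (norm_logDeriv_LFunction_le (by simpa using hχ) hs hs')
  calc _ ≤ ∑ _χ ∈ ({1}ᶜ : Finset (DirichletCharacter ℂ q)), logDerivBound q :=
        norm_sum_le_of_le _ hle
    _ ≤ ∑ _χ : DirichletCharacter ℂ q, logDerivBound q :=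
        sum_le_univ_sum_of_nonneg fun _ => zero_le_one.trans one_le_logDerivBound
    _ = q.totient * logDerivBound q := by
        rw [sum_const, nsmul_eq_mul, card_univ, ← Nat.card_eq_fintype_card,
          DirichletCharacter.card_eq_totient_of_hasEnoughRootsOfUnity]

lemma totient_inv_mul_sub_le_vonMangoldtSum {a : ZMod q} (ha : IsUnit a) {s : ℝ} (hs : 1 < s)
    (hs' : s ≤ 1 + 1 / logDerivBound q) :
    (q.totient : ℝ)⁻¹ * vonMangoldtSum {n | IsUnit (n : ZMod q)} s - logDerivBound q ≤
      vonMangoldtSum {n | (n : ZMod q) = a} s := by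
  classical
  have hφ : (0 : ℝ) < q.totient := by exact_mod_cast Nat.totient_pos.2 (NeZero.pos q)
  have hre := congrArg Complex.re (ofReal_vonMangoldtSum_eq_sub ha hs)
  have herror := (Complex.re_le_norm _).trans (norm_sum_mul_logDeriv_LFunction_le a⁻¹ hs hs')
  rw [← Complex.ofReal_natCast, ← Complex.ofReal_inv, Complex.re_ofReal_mul, Complex.sub_re,
    Complex.ofReal_re, Complex.ofReal_re, mul_sub] at hre
  rw [← inv_mul_le_iff₀ hφ] at herror
  linarith

theorem exists_le_vonMangoldtSum_primes_eq :
    ∃ C, 0 < C ∧ ∀ (q : ℕ) [NeZero q] (a : ZMod q), IsUnit a →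
      ∀ δ : ℝ, 0 < δ → δ ≤ 1 / logDerivBound q →
        1 / (q * δ) - C * logDerivBound q ≤
          vonMangoldtSum {p | p.Prime ∧ (p : ZMod q) = a} (1 + δ) := by
  obtain ⟨C₁, hC₁⟩ := exists_le_vonMangoldtSum_isUnit
  obtain ⟨C₂, hC₂⟩ := exists_vonMangoldtSum_not_prime_le
  refine ⟨|C₁| + |C₂| + 2, by positivity, fun q _ a ha δ hδ hδK => ?_⟩
  have hK := one_le_logDerivBound (q := q)
  have hqK : (q : ℝ) ≤ logDerivBound q := natCast_le_logDerivBound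
  have hδ1 : δ ≤ 1 := hδK.trans one_div_logDerivBound_le_one
  have hs : 1 < 1 + δ := by linarith
  have hφ : (1 : ℝ) ≤ q.totient := by exact_mod_cast Nat.totient_pos.2 (NeZero.pos q)
  have hφq : (q.totient : ℝ) ≤ q := by exact_mod_cast Nat.totient_le q
  have hunits : 1 / δ - (|C₁| + q) ≤ vonMangoldtSum {n | IsUnit (n : ZMod q)} (1 + δ) := by
    have := hC₁ q (1 + δ) ⟨hs, by linarith⟩
    rw [add_sub_cancel_left] at this
    linarith [le_abs_self C₁]
  have hclass : 1 / (q * δ) - (|C₁| + q) - logDerivBound q ≤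
      vonMangoldtSum {n | (n : ZMod q) = a} (1 + δ) :=
    calc 1 / (q * δ) - (|C₁| + q) - logDerivBound q
        ≤ (q.totient : ℝ)⁻¹ * (1 / δ) - (q.totient : ℝ)⁻¹ * (|C₁| + q) - logDerivBound q := by
          rw [one_div, mul_inv, ← one_div δ]
          gcongr
          exact mul_le_of_le_one_left (by positivity) (inv_le_one_of_one_le₀ hφ)
      _ ≤ (q.totient : ℝ)⁻¹ * vonMangoldtSum {n | IsUnit (n : ZMod q)} (1 + δ) -
            logDerivBound q := by
          rw [← mul_sub]
          gcongr
      _ ≤ _ := totient_inv_mul_sub_le_vonMangoldtSum ha hs (by linarith)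
  have hcover : {n : ℕ | (n : ZMod q) = a} ⊆
      {p | p.Prime ∧ (p : ZMod q) = a} ∪ {n | ¬ n.Prime} :=
    fun n hn => (em n.Prime).imp (⟨·, hn⟩) id
  have hscale : |C₁| + |C₂| ≤ (|C₁| + |C₂|) * logDerivBound q :=
    le_mul_of_one_le_right (by positivity) hK
  linarith [vonMangoldtSum_le_add hcover hs, hC₂ _ hs, le_abs_self C₂]

end VonMangoldtSum

/-! ### Sparse sequences -/

section SparseSequence

lemma log_div_rpow_le {δ x y : ℝ} (hδ : 0 < δ) (hx : 0 < x) (hxy : x ≤ y) :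
    Real.log y / y ^ (1 + δ) ≤ 2 / δ * (x ^ (1 + δ / 2))⁻¹ := by
  have hy : 0 < y := hx.trans_le hxy
  calc Real.log y / y ^ (1 + δ)
      ≤ y ^ (δ / 2) / (δ / 2) / y ^ (1 + δ) := by
        gcongr
        exact Real.log_le_rpow_div hy.le (by positivity)
    _ = 2 / δ * (y ^ (1 + δ / 2))⁻¹ := by
        have := (Real.rpow_pos_of_pos hy (δ / 2)).ne'
        rw [show 1 + δ = (1 + δ / 2) + δ / 2 by ring, Real.rpow_add hy (1 + δ / 2)]
        field_simp
    _ ≤ 2 / δ * (x ^ (1 + δ / 2))⁻¹ := by gcongr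

lemma sum_range_mul_le_mul_sum {f b : ℕ → ℝ} {m : ℕ} (h : ∀ i, ∀ r < m, f (m * i + r) ≤ b i)
    (M : ℕ) : ∑ j ∈ range (m * M), f j ≤ m * ∑ i ∈ range M, b i := by
  induction M with
  | zero => simp
  | succ M ih =>
    rw [Nat.mul_succ, sum_range_add, sum_range_succ, mul_add]
    exact add_le_add ih <| by simpa using sum_le_sum fun r hr => h M r (mem_range.1 hr)

variable {e : ℕ → ℕ} {t₀ m H : ℕ}

lemma succ_mul_le_of_add_le (hgap : ∀ t ≥ t₀, e t + H ≤ e (t + m)) (i r : ℕ) :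
    (i + 1) * H ≤ e (t₀ + m + (m * i + r)) := by
  induction i with
  | zero =>
    have := hgap (t₀ + r) (by lia)
    rw [show t₀ + m + (m * 0 + r) = t₀ + r + m by ring]
    lia
  | succ i ih =>
    have := hgap (t₀ + m + (m * i + r)) (by lia)
    rw [show t₀ + m + (m * (i + 1) + r) = t₀ + m + (m * i + r) + m by ring]
    linarith

lemma log_div_rpow_le_of_add_le (hH : 0 < H) (hgap : ∀ t ≥ t₀, e t + H ≤ e (t + m)) {δ : ℝ}
    (hδ : 0 < δ) (i r : ℕ) :
    Real.log (e (t₀ + m + (m * i + r))) / (e (t₀ + m + (m * i + r)) : ℝ) ^ (1 + δ) ≤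
      2 / (δ * H) * (((i + 1 : ℕ) : ℝ) ^ (1 + δ / 2))⁻¹ := by
  have hH' : (1 : ℝ) ≤ H := by exact_mod_cast hH
  have hle : ((i + 1 : ℕ) : ℝ) * H ≤ e (t₀ + m + (m * i + r)) := by
    exact_mod_cast succ_mul_le_of_add_le hgap i r
  calc _ ≤ 2 / δ * ((((i + 1 : ℕ) : ℝ) * H) ^ (1 + δ / 2))⁻¹ :=
        log_div_rpow_le hδ (by positivity) hle
    _ = 2 / δ * ((H : ℝ) ^ (1 + δ / 2))⁻¹ * (((i + 1 : ℕ) : ℝ) ^ (1 + δ / 2))⁻¹ := by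
        rw [Real.mul_rpow (by positivity) (by positivity), mul_inv]
        ring
    _ ≤ 2 / δ * (H : ℝ)⁻¹ * (((i + 1 : ℕ) : ℝ) ^ (1 + δ / 2))⁻¹ := by
        gcongr
        exact Real.self_le_rpow_of_one_le hH' (by linarith)
    _ = 2 / (δ * H) * (((i + 1 : ℕ) : ℝ) ^ (1 + δ / 2))⁻¹ := by
        field_simp

lemma sum_range_log_div_rpow_le (he : ∀ j, 0 < e j) (hm : 0 < m) (hH : 0 < H)
    (hgap : ∀ t ≥ t₀, e t + H ≤ e (t + m)) {δ : ℝ} (hδ : 0 < δ) (hδ1 : δ ≤ 1) (M : ℕ) :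
    ∑ j ∈ range M, Real.log (e j) / (e j : ℝ) ^ (1 + δ) ≤ t₀ + m + 6 * m / (δ ^ 2 * H) := by
  set f : ℕ → ℝ := fun j => Real.log (e j) / (e j : ℝ) ^ (1 + δ)
  have hf_nonneg (j : ℕ) : 0 ≤ f j := div_nonneg (Real.log_natCast_nonneg _) (by positivity)
  have hf_le_one (j : ℕ) : f j ≤ 1 :=
    log_div_rpow_le_one (by exact_mod_cast he j) (by linarith)
  have hhead : ∑ j ∈ range (t₀ + m), f j ≤ t₀ + m := by
    simpa using sum_le_sum fun j (_ : j ∈ range (t₀ + m)) => hf_le_one j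
  have htail : ∑ j ∈ range (m * M), f (t₀ + m + j) ≤ 6 * m / (δ ^ 2 * H) :=
    calc ∑ j ∈ range (m * M), f (t₀ + m + j)
        ≤ m * ∑ i ∈ range M, 2 / (δ * H) * (((i + 1 : ℕ) : ℝ) ^ (1 + δ / 2))⁻¹ :=
          sum_range_mul_le_mul_sum (f := fun j => f (t₀ + m + j))
            (fun i r _ => log_div_rpow_le_of_add_le hH hgap hδ i r) M
      _ ≤ m * (2 / (δ * H) * ((1 + δ / 2) / (1 + δ / 2 - 1))) := by
          rw [← mul_sum]
          gcongr
          exact sum_range_inv_succ_rpow_le (by linarith) M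
      _ = (4 + 2 * δ) * m / (δ ^ 2 * H) := by
          rw [add_sub_cancel_left]
          field_simp
          ring
      _ ≤ 6 * m / (δ ^ 2 * H) := by
          gcongr
          linarith
  calc ∑ j ∈ range M, f j ≤ ∑ j ∈ range (t₀ + m + m * M), f j :=
        sum_le_sum_of_subset_of_nonneg (range_subset_range.2 <| le_add_of_le_right <|
          Nat.le_mul_of_pos_left M hm) fun j _ _ => hf_nonneg j
    _ = ∑ j ∈ range (t₀ + m), f j + ∑ j ∈ range (m * M), f (t₀ + m + j) := sum_range_add ..
    _ ≤ t₀ + m + 6 * m / (δ ^ 2 * H) := add_le_add hhead htail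

end SparseSequence

/-! ### Short windows of primes -/

section ShortWindow

open ArithmeticFunction in
lemma vonMangoldtSum_range {e : ℕ → ℕ} (he : e.Injective) (hp : ∀ j, (e j).Prime) (s : ℝ) :
    vonMangoldtSum (Set.range e) s = ∑' j, Real.log (e j) / (e j : ℝ) ^ s := by
  rw [vonMangoldtSum, ← he.tsum_eq Set.support_indicator_subset]
  refine tsum_congr fun j => ?_
  rw [Set.indicator_of_mem (Set.mem_range_self j), vonMangoldt_apply_prime (hp j)]

lemma sparse_exponent_le {B q k S : ℝ} (hB : 2 ^ 11 ≤ B) (hq : 1 ≤ q) (hk : 1 ≤ k)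
    (hS : S = B * q ^ 4 * k) : 12 * q * k / S ^ 2 ≤ 1 / (2 ^ 11 * q ^ 5) := by
  have : 0 < B := by linarith
  have hS0 : 0 < S := by rw [hS]; positivity
  rw [div_le_div_iff₀ (by positivity) (by positivity)]
  calc 12 * q * k * (2 ^ 11 * q ^ 5) = 12 * 2 ^ 11 * q ^ 6 * k * 1 * 1 := by ring
    _ ≤ B ^ 2 * q ^ 6 * k * q ^ 2 * k := by
        gcongr
        · nlinarith
        · exact one_le_pow₀ hq
    _ = 1 * S ^ 2 := by
        rw [hS]
        ring

lemma sparse_bound_lt {B C q k : ℝ} (hC : 0 < C) (hB : 2 ^ 11 * (C + 1) ≤ B) (hq : 1 ≤ q)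
    (hk : 1 ≤ k) {S δ : ℝ} (hS : S = B * q ^ 4 * k) (hδ : δ = 12 * q * k / S ^ 2) :
    S + 1 + k + 6 * k / (δ ^ 2 * S ^ 2) < 1 / (q * δ) - C * (2 ^ 11 * q ^ 5) := by
  have hB0 : 0 < B := by linarith
  have hmain : 1 / (q * δ) = B ^ 2 / 12 * (q ^ 6 * k) := by
    rw [hδ, hS]
    field_simp
  have hsparse : 6 * k / (δ ^ 2 * S ^ 2) = B ^ 2 / 24 * (q ^ 6 * k) := by
    rw [hδ, hS]
    field_simp
    norm_num
  have hk' : k ≤ q ^ 6 * k := le_mul_of_one_le_left (by linarith) (one_le_pow₀ hq)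
  have hqk : q ^ 5 ≤ q ^ 6 * k :=
    (pow_le_pow_right₀ hq (by norm_num)).trans (le_mul_of_one_le_right (by positivity) hk)
  have hrest : S + 1 + k + C * (2 ^ 11 * q ^ 5) ≤ 2 * B * (q ^ 6 * k) :=
    calc S + 1 + k + C * (2 ^ 11 * q ^ 5)
        ≤ B * (q ^ 6 * k) + q ^ 6 * k + q ^ 6 * k + C * (2 ^ 11 * (q ^ 6 * k)) := by
          rw [hS, mul_assoc]
          gcongr
          · norm_num
          · exact hk.trans hk'
      _ = (B + 2 + 2 ^ 11 * C) * (q ^ 6 * k) := by ring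
      _ ≤ 2 * B * (q ^ 6 * k) := by
          gcongr
          linarith
  have hlt : 2 * B * (q ^ 6 * k) < B ^ 2 / 24 * (q ^ 6 * k) := by
    gcongr
    nlinarith
  linarith

-- `S + 1` is the threshold and `S ^ 2` the gap for the sequence of primes; this `δ` makes
-- `6 * k / (δ ^ 2 * S ^ 2)` half of the main term `1 / (q * δ)`.
lemma exists_sparse_bound_lt {C : ℝ} (hC : 0 < C) :
    ∃ B : ℕ, 0 < B ∧ ∀ q k S : ℕ, 0 < q → 0 < k → S = B * q ^ 4 * k →
      ∃ δ : ℝ, 0 < δ ∧ δ ≤ 1 / logDerivBound q ∧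
        S + 1 + k + 6 * k / (δ ^ 2 * (S : ℝ) ^ 2) < 1 / (q * δ) - C * logDerivBound q := by
  obtain ⟨B, hB⟩ := exists_nat_ge (2 ^ 11 * (C + 1))
  have hB0 : (2 : ℝ) ^ 11 ≤ B := by linarith
  refine ⟨B, by exact_mod_cast (by positivity : (0 : ℝ) < 2 ^ 11).trans_le hB0,
    fun q k S hq hk hS => ?_⟩
  have hq1 : (1 : ℝ) ≤ q := by exact_mod_cast hq
  have hk1 : (1 : ℝ) ≤ k := by exact_mod_cast hk
  have hS' : (S : ℝ) = B * q ^ 4 * k := by exact_mod_cast hS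
  have hS0 : (0 : ℝ) < S := by rw [hS']; positivity
  exact ⟨12 * q * k / S ^ 2, by positivity, sparse_exponent_le hB0 hq1 hk1 hS',
    sparse_bound_lt hC hB hq1 hk1 hS' rfl⟩

theorem exists_apply_add_lt_of_range_eq_primes :
    ∃ B : ℕ, 0 < B ∧ ∀ (q : ℕ) [NeZero q] (a : ZMod q), IsUnit a → ∀ e : ℕ → ℕ, e.Injective →
      Set.range e = {p : ℕ | p.Prime ∧ (p : ZMod q) = a} → ∀ k, 0 < k →
        ∃ t, B * q ^ 4 * k < t ∧ e (t + k) < e t + (B * q ^ 4 * k) ^ 2 := by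
  obtain ⟨C, hC, hlower⟩ := exists_le_vonMangoldtSum_primes_eq
  obtain ⟨B, hB, hlt⟩ := exists_sparse_bound_lt hC
  refine ⟨B, hB, fun q _ a ha e he hrange k hk => ?_⟩
  have hprime (j : ℕ) : (e j).Prime := (hrange.subset (Set.mem_range_self j)).1
  obtain ⟨δ, hδ, hδK, hδlt⟩ := hlt q k _ (NeZero.pos q) hk rfl
  have hδ1 : δ ≤ 1 := hδK.trans one_div_logDerivBound_le_one
  by_contra! hgap
  have hS : 0 < B * q ^ 4 * k := by have := NeZero.pos q; positivity
  set S := B * q ^ 4 * k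
  have hupper : vonMangoldtSum {p : ℕ | p.Prime ∧ (p : ZMod q) = a} (1 + δ) ≤
      S + 1 + k + 6 * k / (δ ^ 2 * (S : ℝ) ^ 2) := by
    rw [← hrange, vonMangoldtSum_range he hprime]
    refine Real.tsum_le_of_sum_range_le
      (fun j => div_nonneg (Real.log_natCast_nonneg _) (by positivity)) fun M => ?_
    exact_mod_cast sum_range_log_div_rpow_le (t₀ := S + 1) (H := S ^ 2)
      (fun j => (hprime j).pos) hk (by positivity) (fun t ht => hgap t ht) hδ hδ1 M
  linarith [hlower q a ha δ hδ hδK]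

lemma primeMod_iff {q : ℕ} {a : ℤ} {p : ℕ} :
    PrimeMod q a p ↔ p.Prime ∧ (p : ZMod q) = (a : ZMod q) := by
  rw [PrimeMod, ← ZMod.intCast_eq_intCast_iff, Int.cast_natCast]

lemma infinite_setOf_primeMod {q : ℕ} [NeZero q] {a : ℤ} (ha : IsUnit (a : ZMod q)) :
    {p | PrimeMod q a p}.Infinite := by
  simpa only [primeMod_iff] using Nat.infinite_setOfPred_prime_and_eq_mod ha

end ShortWindow

end

theorem exists_good_t_with_bound_general :
    ∃ A : ℝ, 0 < A ∧ ∀ (q : ℕ) (a : ℤ), 1 ≤ q → Int.gcd a q = 1 → ∀ k : ℕ, 1 ≤ k →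
      ∃ t : ℕ, 1 ≤ t ∧ k < ell q a (t + 1) ∧ ell q a (t + k) < ell q a (t + 1) ^ 2 ∧
        (ell q a (t + k) : ℝ) - ell q a (t + 1) < A * (q : ℝ) ^ 8 * (k : ℝ) ^ 2 := by
  obtain ⟨B, hB, hwindow⟩ := exists_apply_add_lt_of_range_eq_primes
  refine ⟨(B : ℝ) ^ 2, by positivity, fun q a hq hgcd k hk => ?_⟩
  have : NeZero q := ⟨by lia⟩
  have ha : IsUnit (a : ZMod q) := by
    rwa [ZMod.coe_int_isUnit_iff_isCoprime, Int.isCoprime_iff_gcd_eq_one, Int.gcd_comm]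
  have hinf := infinite_setOf_primeMod ha
  have hmono : StrictMono (Nat.nth (PrimeMod q a)) := Nat.nth_strictMono hinf
  obtain ⟨t, hSt, hlt⟩ := hwindow q a ha _ hmono.injective
    (by simp only [Nat.range_nth_of_infinite hinf, primeMod_iff]) k hk
  have hkS : k ≤ B * q ^ 4 * k := Nat.le_mul_of_pos_left k (by positivity)
  have hte : t ≤ ell q a (t + 1) := hmono.le_apply
  have hwin : ell q a (t + k) < ell q a (t + 1) + (B * q ^ 4 * k) ^ 2 :=
    (hmono.monotone (by lia : t + k - 1 ≤ t + k)).trans_lt hlt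
  refine ⟨t, by lia, by lia, by nlinarith, ?_⟩
  have : (ell q a (t + k) : ℝ) < ell q a (t + 1) + (B * q ^ 4 * k) ^ 2 := by exact_mod_cast hwin
  linarith

/-- There exist absolute positive constants `A` and `N` such that for all integers
`q ≥ 3` and `a` with `gcd(a, q) = 1` and every `k ≥ 2`, there is a `t ≥ 1` with
`k < ℓ_{t+1}`, `ℓ_{t+k} < ℓ_{t+1}²`, and `ℓ_{t+k} − ℓ_{t+1} < A q^N k² log(qk)`. -/
theorem exists_good_t_with_bound :
    ∃ A N : ℝ, 0 < A ∧ 0 < N ∧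
      ∀ (q : ℕ) (a : ℤ), 3 ≤ q → Int.gcd a q = 1 → ∀ k : ℕ, 2 ≤ k →
        ∃ t : ℕ, 1 ≤ t ∧ k < ell q a (t + 1) ∧
          ell q a (t + k) < ell q a (t + 1) ^ 2 ∧
          ((ell q a (t + k) : ℝ) - (ell q a (t + 1) : ℝ)) <
            A * (q : ℝ) ^ N * (k : ℝ) ^ 2 * Real.log (q * k) := by
  obtain ⟨A, hA, hgood⟩ := exists_good_t_with_bound_general
  refine ⟨A, 8, hA, by norm_num, fun q a hq hgcd k hk => ?_⟩
  obtain ⟨t, ht, hkt, hsq, hlt⟩ := hgood q a (by lia) hgcd k (by lia)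
  have hqk : Real.exp 1 ≤ q * k := by
    have : (6 : ℝ) ≤ q * k := by exact_mod_cast Nat.mul_le_mul hq hk
    linarith [Real.exp_one_lt_d9]
  have hlog : 1 ≤ Real.log (q * k) := (Real.le_log_iff_exp_le (by positivity)).2 hqk
  refine ⟨t, ht, hkt, hsq, hlt.trans_le ?_⟩
  exact_mod_cast le_mul_of_one_le_right (by positivity : 0 ≤ A * (q : ℝ) ^ 8 * (k : ℝ) ^ 2) hlog
end
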